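/- Let w be the fixed point of the morphism φ from the construction. Then every factor v of w of length at least 2 has some cyclic permutation that is not a factor of w. -/

import Mathlib

/-- The 12-letter alphabet `{x₁,…,x₆,y₁,…,y₆}`: `(false, i)` is `x_{i+1}`
and `(true, j)` is `y_{j+1}`. -/
abbrev Letter : Type := Bool × Fin 6

/-- The letter `x_{i+1}`. -/
def X (i : Fin 6) : Letter := (false, i)

/-- The letter `y_{j+1}`. -/
def Y (j : Fin 6) : Letter := (true, j)

/-- The morphism of the construction: `x₁↦x₁x₂y₁y₂, x₂↦x₁x₃y₁y₃, x₃↦x₁x₄y₁y₄,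
x₄↦x₁x₅y₁y₅, x₅↦x₁x₆y₁y₆, x₆↦x₂x₃y₂y₃, y₁↦x₂x₄y₂y₅, y₂↦x₂x₅y₃y₄, y₃↦x₂x₆y₂y₆,
y₄↦x₃x₄y₃y₅, y₅↦x₃x₅y₃y₆, y₆↦x₃x₆y₄y₅`. -/
def phi : Letter → List Letter := fun a =>
  [[X 0, X 1, Y 0, Y 1], [X 0, X 2, Y 0, Y 2], [X 0, X 3, Y 0, Y 3],
   [X 0, X 4, Y 0, Y 4], [X 0, X 5, Y 0, Y 5], [X 1, X 2, Y 1, Y 2],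
   [X 1, X 3, Y 1, Y 4], [X 1, X 4, Y 2, Y 3], [X 1, X 5, Y 1, Y 5],
   [X 2, X 3, Y 2, Y 4], [X 2, X 4, Y 2, Y 5], [X 2, X 5, Y 3, Y 4]].getD
    ((if a.1 then 6 else 0) + a.2.val) []

/-- A monoid morphism applied to a word. -/
def applyM {α : Type*} (φ : α → List α) (u : List α) : List α := u.flatMap φ

/-- The block of `len` consecutive letters of `w` starting at position `i`. -/
def toListW {α : Type*} (w : ℕ → α) (i len : ℕ) : List α :=
  (List.range len).map fun k => w (i + k)

/-- `v` is a factor (subword) of the right-infinite word `w`. -/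
def IsFactor {α : Type*} (v : List α) (w : ℕ → α) : Prop :=
  ∃ i, toListW w i v.length = v

/-- `v` is a prefix of the right-infinite word `w`. -/
def IsPrefixW {α : Type*} (v : List α) (w : ℕ → α) : Prop :=
  toListW w 0 v.length = v

/-- `w` is the fixed point `φ^ω(x₁)` of the (4-uniform) morphism `phi`:
for every `n`, `phi^n(x₁)` (a word of length `4^n`) is a prefix of `w`. -/
def IsFixedPointWord (w : ℕ → Letter) : Prop :=
  ∀ n : ℕ, toListW w 0 (4 ^ n) = (applyM phi)^[n] [X 0]

/-- The `k`-th letter of the image of `a`. -/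
def gl (k : ℕ) (a : Letter) : Letter := (phi a).getD k (X 0)

theorem phi_eq : ∀ a : Letter, phi a = [gl 0 a, gl 1 a, gl 2 a, gl 3 a] := by decide

theorem t0 : ∀ a, (gl 0 a).1 = false := by decide
theorem t1 : ∀ a, (gl 1 a).1 = false := by decide
theorem t2 : ∀ a, (gl 2 a).1 = true := by decide
theorem t3 : ∀ a, (gl 3 a).1 = true := by decide
theorem inj01 : ∀ a b, gl 0 a = gl 0 b → gl 1 a = gl 1 b → a = b := by decide
theorem inj23 : ∀ a b, gl 2 a = gl 2 b → gl 3 a = gl 3 b → a = b := by decide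
theorem ne01 : ∀ a, gl 0 a ≠ gl 1 a := by decide
theorem ne23 : ∀ a, gl 2 a ≠ gl 3 a := by decide
theorem sw01 : ∀ a b, gl 0 a = gl 1 b → gl 1 a = gl 0 b → False := by decide
theorem sw23 : ∀ a b, gl 2 a = gl 3 b → gl 3 a = gl 2 b → False := by decide
theorem x1_1 : ∀ a, gl 1 a ≠ X 0 := by decide
theorem sw12q : ∀ p q, gl 2 p = gl 3 q → gl 1 p = X 2 ∨ gl 1 p = X 1 ∨ gl 1 p = X 0 →
    q = X 0 ∧ gl 1 p = X 2 := by decide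
theorem g0mem : ∀ a, gl 0 a = X 2 ∨ gl 0 a = X 1 ∨ gl 0 a = X 0 := by decide
theorem g0x3 : ∀ a, gl 0 a = X 2 → a.1 = true := by decide

theorem flat_eq (w : ℕ → Letter) (M : ℕ) :
    (toListW w 0 M).flatMap phi = toListW (fun m => gl (m % 4) (w (m / 4))) 0 (4 * M) := by
  induction M with
  | zero => simp [toListW]
  | succ M ih =>
    have e : 4 * (M + 1) = 4 * M + 1 + 1 + 1 + 1 := by ring
    unfold toListW at *
    simp only [zero_add] at ih
    have h0 : (4 * M) % 4 = 0 := by omega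
    have h1 : (4 * M + 1) % 4 = 1 := by omega
    have h2 : (4 * M + 2) % 4 = 2 := by omega
    have h3 : (4 * M + 3) % 4 = 3 := by omega
    have h7 : (4 * M) / 4 = M := by omega
    have h4 : (4 * M + 1) / 4 = M := by omega
    have h5 : (4 * M + 2) / 4 = M := by omega
    have h6 : (4 * M + 3) / 4 = M := by omega
    rw [e]
    simp only [List.range_succ, List.map_append, List.flatMap_append, List.map_cons,
      List.map_nil, List.flatMap_cons, List.flatMap_nil, List.append_nil, phi_eq (w M),
      List.append_assoc, List.cons_append, List.nil_append, zero_add, ih, add_assoc,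
      Nat.reduceAdd, h0, h1, h2, h3, h4, h5, h6, h7]

theorem toListW_eq {w c : ℕ → Letter} {i j L : ℕ} (h : toListW w i L = toListW c j L) :
    ∀ k < L, w (i + k) = c (j + k) := by
  intro k hk
  have := congrArg (fun l => l[k]?) h
  simpa [toListW, hk] using this

theorem fixed_step (w : ℕ → Letter) (hw : IsFixedPointWord w) (m : ℕ) :
    w m = gl (m % 4) (w (m / 4)) := by
  have h1 := hw (m + 1)
  rw [Function.iterate_succ_apply', ← hw m, applyM, flat_eq, pow_succ, mul_comm] at h1
  have hm : m < 4 ^ m := Nat.lt_pow_self (by norm_num)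
  simpa using toListW_eq h1 m (by omega)


theorem wk {w : ℕ → Letter} (hf : ∀ m, w m = gl (m % 4) (w (m / 4))) (q k : ℕ) (hk : k < 4) :
    w (4 * q + k) = gl k (w q) := by
  rw [hf]
  have h1 : (4 * q + k) % 4 = k := by omega
  have h2 : (4 * q + k) / 4 = q := by omega
  rw [h1, h2]

/-- Every position is of the form `4q+k`. -/
theorem cases4 (i : ℕ) : ∃ q, i = 4 * q + 0 ∨ i = 4 * q + 1 ∨ i = 4 * q + 2 ∨ i = 4 * q + 3 :=
  ⟨i / 4, by omega⟩

theorem type_iff {w : ℕ → Letter} (hf : ∀ m, w m = gl (m % 4) (w (m / 4))) (i : ℕ) :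
    (w i).1 = decide (2 ≤ i % 4) := by
  obtain ⟨q, h | h | h | h⟩ := cases4 i <;> subst h <;> rw [wk hf _ _ (by norm_num)]
  · rw [t0]; symm; rw [decide_eq_false_iff_not]; omega
  · rw [t1]; symm; rw [decide_eq_false_iff_not]; omega
  · rw [t2]; symm; rw [decide_eq_true_iff]; omega
  · rw [t3]; symm; rw [decide_eq_true_iff]; omega

theorem type_false {w : ℕ → Letter} (hf : ∀ m, w m = gl (m % 4) (w (m / 4))) (i : ℕ) :
    (w i).1 = false ↔ i % 4 < 2 := by
  rw [type_iff hf, decide_eq_false_iff_not]; omega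

theorem type_true {w : ℕ → Letter} (hf : ∀ m, w m = gl (m % 4) (w (m / 4))) (i : ℕ) :
    (w i).1 = true ↔ 2 ≤ i % 4 := by
  rw [type_iff hf, decide_eq_true_iff]

theorem succ_ne {w : ℕ → Letter} (hf : ∀ m, w m = gl (m % 4) (w (m / 4))) (i : ℕ) :
    w i ≠ w (i + 1) := by
  intro h
  have hT := congrArg Prod.fst h
  rw [type_iff hf, type_iff hf, decide_eq_decide] at hT
  obtain ⟨q, h' | h' | h' | h'⟩ := cases4 i
  · subst h'
    rw [add_assoc, wk hf _ _ (by norm_num), wk hf _ _ (by norm_num)] at h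
    exact ne01 _ h
  · omega
  · subst h'
    rw [add_assoc, wk hf _ _ (by norm_num), wk hf _ _ (by norm_num)] at h
    exact ne23 _ h
  · omega

theorem x1_next {w : ℕ → Letter} (hf : ∀ m, w m = gl (m % 4) (w (m / 4))) (i : ℕ)
    (h : w i = X 0) : (w (i + 1)).1 = false := by
  have hT := congrArg Prod.fst h
  have hx : (X 0).1 = false := rfl
  rw [hx, type_false hf] at hT
  rw [type_false hf]
  obtain ⟨q, h' | h' | h' | h'⟩ := cases4 i
  · omega
  · subst h'
    rw [wk hf _ _ (by norm_num)] at h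
    exact absurd h (x1_1 _)
  · omega
  · omega

/-- The words `x y` and `y x` are not both factors. -/
theorem mixed {w : ℕ → Letter} (hf : ∀ m, w m = gl (m % 4) (w (m / 4))) (p q : ℕ)
    (h1 : w (4 * p + 1) = w (4 * (q + 1) + 0)) (h2 : w (4 * p + 2) = w (4 * q + 3)) : False := by
  rw [wk hf _ _ (by norm_num), wk hf _ _ (by norm_num)] at h1 h2
  have hm := g0mem (w (q + 1))
  rw [← h1] at hm
  obtain ⟨ha, hb⟩ := sw12q _ _ h2 hm
  have hc := g0x3 _ (h1.symm.trans hb)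
  rw [x1_next hf q ha] at hc
  exact absurd hc (by decide)

theorem no_two {w : ℕ → Letter} (hf : ∀ m, w m = gl (m % 4) (w (m / 4))) (i j : ℕ)
    (h1 : w i = w (j + 1)) (h2 : w (i + 1) = w j) : False := by
  have T1 := congrArg Prod.fst h1
  have T2 := congrArg Prod.fst h2
  rw [type_iff hf, type_iff hf, decide_eq_decide] at T1 T2
  obtain ⟨p, hi⟩ : ∃ p, i = 4 * p + i % 4 := ⟨i / 4, by omega⟩
  obtain ⟨q, hj⟩ : ∃ q, j = 4 * q + j % 4 := ⟨j / 4, by omega⟩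
  have hc : (i % 4 = 0 ∧ j % 4 = 0) ∨ (i % 4 = 2 ∧ j % 4 = 2) ∨ (i % 4 = 1 ∧ j % 4 = 3) ∨
      (i % 4 = 3 ∧ j % 4 = 1) := by omega
  obtain ⟨a, b⟩ | ⟨a, b⟩ | ⟨a, b⟩ | ⟨a, b⟩ := hc <;> rw [a] at hi <;> rw [b] at hj <;>
    subst hi <;> subst hj
  · rw [add_assoc, wk hf _ _ (by norm_num), wk hf _ _ (by norm_num)] at h1 h2
    exact sw01 _ _ h1 h2
  · rw [add_assoc, wk hf _ _ (by norm_num), wk hf _ _ (by norm_num)] at h1 h2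
    exact sw23 _ _ h1 h2
  · exact mixed hf p q h1 h2
  · exact mixed hf q p h2.symm h1.symm

theorem core_false {w : ℕ → Letter} (hf : ∀ m, w m = gl (m % 4) (w (m / 4))) (L : ℕ) :
    ∀ c : ℕ → Letter, 2 ≤ L → (∀ n, c (n + L) = c n) →
    (∀ s, ∃ i, ∀ k < L, w (i + k) = c (s + k)) → False := by
  induction L using Nat.strong_induction_on with
  | _ L ih =>
  intro c hL hp hr
  by_cases hL2 : L = 2
  · subst hL2
    obtain ⟨i, hi⟩ := hr 0
    obtain ⟨j, hj⟩ := hr 1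
    have a0 := hi 0 (by norm_num)
    have a1 := hi 1 (by norm_num)
    have b0 := hj 0 (by norm_num)
    have b1 := hj 1 (by norm_num)
    have p0 := hp 0
    simp only [zero_add, add_zero, Nat.reduceAdd] at a0 a1 b0 b1 p0
    exact no_two hf i j (by rw [a0, b1, p0]) (by rw [a1, b0])
  -- types flip after two steps
  have flip : ∀ n, (c (n + 2)).1 = !(c n).1 := by
    intro n
    obtain ⟨i, hi⟩ := hr n
    have h0 := hi 0 (by omega)
    have h2 := hi 2 (by omega)
    rw [← h2, ← add_zero n, ← h0, add_zero, type_iff hf, type_iff hf, ← decide_not,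
      decide_eq_decide]
    omega
  have flip2 : ∀ n, (c (n + 4)).1 = (c n).1 := by
    intro n
    have := flip (n + 2)
    rw [flip n] at this
    simpa using this
  have flip4 : ∀ m n, (c (n + 4 * m)).1 = (c n).1 := by
    intro m
    induction m with
    | zero => intro n; rfl
    | succ m ihm => intro n; rw [← ihm n, ← flip2 (n + 4 * m)]; rfl
  have hL4 : ∃ m, L = 4 * m := by
    by_contra hne
    push Not at hne
    have hd : L % 4 ≠ 0 := fun h => hne (L / 4) (by omega)
    by_cases h2 : L % 4 = 2
    · have e : L = 2 + 4 * (L / 4) := by omega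
      have := hp 0
      rw [e, zero_add] at this
      have h3 := flip4 (L / 4) 2
      rw [this] at h3
      have h4 := flip 0
      rw [zero_add, ← h3] at h4
      simp at h4
    · have e : L + L = 2 + 4 * (L / 2) := by omega
      have := (hp (0 + L)).trans (hp 0)
      rw [zero_add, e] at this
      have h3 := flip4 (L / 2) 2
      rw [this] at h3
      have h4 := flip 0
      rw [zero_add, ← h3] at h4
      simp at h4
  obtain ⟨m, hm⟩ := hL4
  obtain ⟨s, hs0, hs1⟩ : ∃ s, (c s).1 = false ∧ (c (s + 1)).1 = false := by
    have f0 := flip 0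
    have f1 := flip 1
    have f2 := flip 2
    simp only [zero_add, Nat.reduceAdd] at f0 f1 f2
    cases h0 : (c 0).1 <;> cases h1 : (c 1).1
    · exact ⟨0, h0, h1⟩
    · exact ⟨3, by simp [f1, h1], by simp [f2, f0, h0]⟩
    · exact ⟨1, h1, by simp [f0, h0]⟩
    · exact ⟨2, by simp [f0, h0], by simp [f1, h1]⟩
  -- block-aligned rotations
  have al : ∀ j, ∃ q, ∀ k < m, ∀ l < 4, gl l (w (q + k)) = c (s + 4 * (j + k) + l) := by
    intro j
    obtain ⟨i, hi⟩ := hr (s + 4 * j)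
    have h0 := congrArg Prod.fst (hi 0 (by omega))
    have h1 := congrArg Prod.fst (hi 1 (by omega))
    have e1 : s + 4 * j + 1 = (s + 1) + 4 * j := by ring
    rw [add_zero, add_zero, flip4, hs0, type_false hf] at h0
    rw [e1, flip4, hs1, type_false hf] at h1
    obtain ⟨q, rfl⟩ : ∃ q, i = 4 * q := ⟨i / 4, by omega⟩
    refine ⟨q, fun k hk l hl => ?_⟩
    rw [← wk hf _ _ hl]
    have := hi (4 * k + l) (by omega)
    have e2 : 4 * (q + k) + l = 4 * q + (4 * k + l) := by ring
    have e3 : s + 4 * (j + k) + l = s + 4 * j + (4 * k + l) := by ring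
    rw [e2, e3, this]
  by_cases hm1 : m = 1
  · subst hm1
    obtain ⟨q, hq⟩ := al 0
    obtain ⟨i, hi⟩ := hr (s + 2)
    have i0 := hi 0 (by omega)
    have i1 := hi 1 (by omega)
    have i2 := hi 2 (by omega)
    have i3 := hi 3 (by omega)
    have q0 := hq 0 (by omega) 0 (by omega)
    have q1 := hq 0 (by omega) 1 (by omega)
    have q2 := hq 0 (by omega) 2 (by omega)
    have q3 := hq 0 (by omega) 3 (by omega)
    have p0 := hp s
    have p1 := hp (s + 1)
    rw [hm] at p0 p1
    simp only [add_assoc, mul_one, mul_zero, add_zero, Nat.reduceAdd]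
      at i0 i1 i2 i3 q0 q1 q2 q3 p0 p1
    rw [p0, ← q0] at i2
    rw [p1, ← q1] at i3
    rw [← q2] at i0
    rw [← q3] at i1
    have T0 := congrArg Prod.fst i0
    have T1 := congrArg Prod.fst i1
    rw [t2, type_true hf] at T0
    rw [t3, type_true hf] at T1
    obtain ⟨p, rfl⟩ : ∃ p, i = 4 * p + 2 := ⟨i / 4, by omega⟩
    have e2 : 4 * p + 2 + 2 = 4 * (p + 1) + 0 := by ring
    have e3 : 4 * p + 2 + 3 = 4 * (p + 1) + 1 := by ring
    rw [wk hf _ _ (by norm_num)] at i0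
    rw [add_assoc, wk hf _ _ (by norm_num)] at i1
    rw [e2, wk hf _ _ (by norm_num)] at i2
    rw [e3, wk hf _ _ (by norm_num)] at i3
    exact succ_ne hf p ((inj23 _ _ i0 i1).trans (inj01 _ _ i2 i3).symm)
  · have hex : ∀ n, ∃ a, gl 0 a = c (s + 4 * n + 0) ∧ gl 1 a = c (s + 4 * n + 1) := by
      intro n
      obtain ⟨q, hq⟩ := al n
      exact ⟨w (q + 0), hq 0 (by omega) 0 (by omega), hq 0 (by omega) 1 (by omega)⟩
    choose d hd0 hd1 using hex
    refine ih m (by omega) d (by omega) ?_ ?_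
    · intro n
      apply inj01
      · rw [hd0, hd0, ← hp (s + 4 * n + 0)]; congr 1; rw [hm]; ring
      · rw [hd1, hd1, ← hp (s + 4 * n + 1)]; congr 1; rw [hm]; ring
    · intro j
      obtain ⟨q, hq⟩ := al j
      refine ⟨q, fun k hk => ?_⟩
      apply inj01
      · rw [hd0, hq k hk 0 (by omega)]
      · rw [hd1, hq k hk 1 (by omega)]

theorem stmt9 (w : ℕ → Letter) (hw : IsFixedPointWord w)
    (v : List Letter) (hv : IsFactor v w) (hlen : 2 ≤ v.length) :
    ∃ a b : List Letter, v = a ++ b ∧ a ≠ [] ∧ b ≠ [] ∧ ¬ IsFactor (b ++ a) w := by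
  by_contra hcon
  push Not at hcon
  have hf := fixed_step w hw
  have h0 : v.length ≠ 0 := by omega
  have hpos : 0 < v.length := by omega
  refine core_false hf v.length (fun n => v.getD (n % v.length) (X 0)) hlen
    (fun n => by simp) ?_
  -- every rotation occurs
  intro s
  have hrot : IsFactor (v.rotate (s % v.length)) w := by
    by_cases hs : s % v.length = 0
    · simpa [hs] using hv
    · have hlt := Nat.mod_lt s hpos
      rw [List.rotate_eq_drop_append_take hlt.le]
      apply hcon _ _ (List.take_append_drop _ v).symm
      · intro h
        have := congrArg List.length h
        simp only [List.length_take, List.length_drop, List.length_nil] at this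
        omega
      · intro h
        have := congrArg List.length h
        simp only [List.length_take, List.length_drop, List.length_nil] at this
        omega
  obtain ⟨i, hi⟩ := hrot
  refine ⟨i, fun k hk => ?_⟩
  have := congrArg (fun l => l[k]?) hi
  simp only [List.length_rotate] at this
  rw [List.getElem?_rotate hk] at this
  simp only [toListW, List.getElem?_map, List.getElem?_range hk, Option.map_some] at this
  simp only [List.getD_eq_getElem?_getD]
  have e : (s + k) % v.length = (k + s % v.length) % v.length := by
    rw [Nat.add_mod_mod, add_comm]
  rw [e, ← this]
  rfl
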